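/- The sequence of Lemma 5.4 can be chosen with constant signs: there exist l₀ : ℕ and a sequence ω : ℕ → ℂ with ‖ω l‖ = 1, ω l ≠ 1 for all l > l₀, and ω l → −1, such that all the Hermitian matrices Hₘ(ω l) and H_M(ω l) (l > l₀, m : ℕ) are nonsingular, sig(Hₘ(ω l)) = sig(H_M(ω l)) for all l₀ < m < l, and for every m > l₀ there exists ε m ∈ ({−2, 2} : Set ℤ) with sig(Hₘ(ω l)) = sig(H_M(ω l)) + ε m for all l with l₀ < l ≤ m. -/

import Mathlib

/-!
The last two rows and columns of `Hₙ(ω)` meet the block `H_M(ω)` in a single entry, so the Schur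
complement of `H_M(ω)` in `Hₙ(ω)` is an explicit `2 × 2` Hermitian matrix which depends on
`H_M(ω)` only through the real number `f = s (H_M(ω)⁻¹)₀₀`, where `s = |1 - ω|²`. Its trace is
negative when `f > 0`, and its determinant is `s (n f - 1)` (`schur_det`). By additivity of the
signature along Schur complements (`matSig_schur`), the signatures of `Hₙ(ω)` and `H_M(ω)` agree
when `n f < 1` and differ by `-2` when `n f > 1`; in particular the sign is always negative.

It remains to find `ω_l → -1` with `1 / l < f < 1 / (l - 1)`; the value used is `2 / (2 l - 1)`,
and then `n f ≠ 1` for every integer `n`, which gives nonsingularity for all `n` at once.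
Solving `H_M(ω) v = e₀` by the first column of the adjugate of `ω M - Mᵀ` (`adjCol`) gives
`f = -(1 - ω)² (1 + ω³) (1 + ω⁷) / Δ(ω)`, with `Δ` the Alexander polynomial of `T(3,7)`. On the
unit circle numerator and denominator are `ω⁶` times real polynomials in `y = 2 + 2 Re ω`
(`alex_eq`, `num_eq`). Near `y = 0`, i.e. `ω = -1`, the denominator is close to `1` and the
numerator is close to `84 y`, so the intermediate value theorem yields the required points with
`y = O(1 / l)` (`exists_arc_point`).

Additivity of the signature rests on Sylvester's law of inertia for complex diagonal forms
(`card_pos_eq`), proved by the usual dimension count.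
-/

open Matrix

/-- The Seifert matrix `Sₙ` of the knot `Kₙ`. -/
def Smat (n : ℕ) : Matrix (Fin 14) (Fin 14) ℤ :=
  !![-1, 0, 0, 0, 0, 0, 1, 0, 0, 0, 0, 0, 0, -1;
      1,-1, 0, 0, 0, 0,-1, 1, 0, 0, 0, 0, 0, 0;
      0, 1,-1, 0, 0, 0, 0,-1, 1, 0, 0, 0, 0, 0;
      0, 0, 1,-1, 0, 0, 0, 0,-1, 1, 0, 0, 0, 0;
      0, 0, 0, 1,-1, 0, 0, 0, 0,-1, 1, 0, 0, 0;
      0, 0, 0, 0, 1,-1, 0, 0, 0, 0,-1, 0, 0, 0;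
      0, 0, 0, 0, 0, 0,-1, 0, 0, 0, 0, 0, 0, 0;
      0, 0, 0, 0, 0, 0, 1,-1, 0, 0, 0, 0, 0, 0;
      0, 0, 0, 0, 0, 0, 0, 1,-1, 0, 0, 0, 0, 0;
      0, 0, 0, 0, 0, 0, 0, 0, 1,-1, 0, 0, 0, 0;
      0, 0, 0, 0, 0, 0, 0, 0, 0, 1,-1, 0, 0, 0;
      0, 0, 0, 0, 0, 0, 0, 0, 0, 0, 1,-1, 0, 0;
      0, 0, 0, 0, 0, 0, 0, 0, 0, 0, 0, 0, -(n:ℤ), (n:ℤ);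
      0, 0, 0, 0, 0, 0, 0, 0, 0, 0, 0, 0, (n:ℤ)+1, -((n:ℤ)+1)]

/-- The upper-left 12×12 submatrix of `Sₙ` (independent of `n`): the Seifert
matrix of the torus knot `T(3,7)`. -/
def Mmat : Matrix (Fin 12) (Fin 12) ℤ :=
  (Smat 0).submatrix (Fin.castLE (by omega)) (Fin.castLE (by omega))

/-- `Sₙ` as a complex matrix. -/
def SmatC (n : ℕ) : Matrix (Fin 14) (Fin 14) ℂ := (Smat n).map fun a => (a : ℂ)

/-- `M` as a complex matrix. -/
def MmatC : Matrix (Fin 12) (Fin 12) ℂ := Mmat.map fun a => (a : ℂ)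

/-- The Alexander polynomial `Δ_{K₀}` evaluated at `x`. -/
noncomputable def P0 (x : ℂ) : ℂ :=
  x ^ 12 - x ^ 10 + x ^ 6 - x ^ 4 + 1 - x⁻¹ ^ 4 + x⁻¹ ^ 6 - x⁻¹ ^ 10 + x⁻¹ ^ 12

/-- The Alexander polynomial `Δ_{K₁}` evaluated at `x`. -/
noncomputable def P1 (x : ℂ) : ℂ :=
  2 * x ^ 12 - 3 * x ^ 10 + x ^ 8 + 2 * x ^ 6 - 3 * x ^ 4 + x ^ 2 + 1
    + x⁻¹ ^ 2 - 3 * x⁻¹ ^ 4 + 2 * x⁻¹ ^ 6 + x⁻¹ ^ 8 - 3 * x⁻¹ ^ 10 + 2 * x⁻¹ ^ 12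

/-- The Tristram–Levine form of `Kₘ` at `ω`. -/
noncomputable def Hn (m : ℕ) (ω : ℂ) : Matrix (Fin 14) (Fin 14) ℂ :=
  (1 - ω) • SmatC m + (1 - (starRingEnd ℂ) ω) • (SmatC m)ᵀ

/-- The Tristram–Levine form of `K₀` at `ω`. -/
noncomputable def HM (ω : ℂ) : Matrix (Fin 12) (Fin 12) ℂ :=
  (1 - ω) • MmatC + (1 - (starRingEnd ℂ) ω) • MmatCᵀ

/-- The signature of a Hermitian complex matrix: the number of positive eigenvalues
minus the number of negative eigenvalues (and `0` for non-Hermitian matrices). -/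
noncomputable def matSig {n : ℕ} (H : Matrix (Fin n) (Fin n) ℂ) : ℤ := by
  classical
  exact if h : H.IsHermitian then
    ((Finset.univ.filter fun i => 0 < h.eigenvalues i).card : ℤ) -
    ((Finset.univ.filter fun i => h.eigenvalues i < 0).card : ℤ)
  else 0

/-! ### The Seifert matrix of `T(3,7)` -/

/-- The Alexander polynomial of the torus knot `T(3,7)`, normalised so that
`det (ω M - Mᵀ) = alex ω`. -/
def alex (ω : ℂ) : ℂ :=
  ω ^ 12 - ω ^ 11 + ω ^ 9 - ω ^ 8 + ω ^ 6 - ω ^ 4 + ω ^ 3 - ω + 1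

lemma MmatC_mulVec (x : Fin 12 → ℂ) :
    MmatC *ᵥ x =
      ![-x 0 + x 6, x 0 - x 1 - x 6 + x 7, x 1 - x 2 - x 7 + x 8, x 2 - x 3 - x 8 + x 9,
        x 3 - x 4 - x 9 + x 10, x 4 - x 5 - x 10,
        -x 6, x 6 - x 7, x 7 - x 8, x 8 - x 9, x 9 - x 10, x 10 - x 11] := by
  ext i
  fin_cases i <;>
    simp [MmatC, Mmat, Smat, mulVec, dotProduct, Fin.sum_univ_succ, Fin.castLE] <;> ring_nf

lemma MmatCT_mulVec (x : Fin 12 → ℂ) :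
    MmatCᵀ *ᵥ x =
      ![-x 0 + x 1, -x 1 + x 2, -x 2 + x 3, -x 3 + x 4, -x 4 + x 5, -x 5,
        x 0 - x 1 - x 6 + x 7, x 1 - x 2 - x 7 + x 8, x 2 - x 3 - x 8 + x 9,
        x 3 - x 4 - x 9 + x 10, x 4 - x 5 - x 10 + x 11, -x 11] := by
  ext i
  fin_cases i <;>
    simp [MmatC, Mmat, Smat, mulVec, dotProduct, Fin.sum_univ_succ, Fin.castLE] <;> ring_nf

/-- The first column of the adjugate of `ω M - Mᵀ`. -/
def adjCol (ω : ℂ) : Fin 12 → ℂ :=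
  ![1 - ω + ω ^ 3 - ω ^ 4 + ω ^ 7 - ω ^ 8 + ω ^ 10 - ω ^ 11,
     ω ^ 7 - ω ^ 8 + ω ^ 10 - ω ^ 11,
     -ω ^ 2 + ω ^ 3 - ω ^ 5 + ω ^ 6 - ω ^ 8 + ω ^ 10 - ω ^ 11,
     ω ^ 3 - ω ^ 4 + ω ^ 6 - ω ^ 7 + ω ^ 10 - ω ^ 11,
     ω ^ 10 - ω ^ 11,
     -ω ^ 5 + ω ^ 6 - ω ^ 8 + ω ^ 9 - ω ^ 11,
     1 - ω + ω ^ 3 - ω ^ 4 + ω ^ 5,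
     -ω + ω ^ 2 - ω ^ 4 + 2 * ω ^ 5 - ω ^ 6,
     ω ^ 5 - ω ^ 6,
     ω ^ 3 - ω ^ 4 + ω ^ 5 - ω ^ 7 + ω ^ 8,
     -ω ^ 4 + 2 * ω ^ 5 - ω ^ 6 - ω ^ 7 + 2 * ω ^ 8 - ω ^ 9,
     ω ^ 5 - ω ^ 6 + ω ^ 8 - ω ^ 9]

lemma seifert_mulVec_adjCol (ω : ℂ) :
    ω • (MmatC *ᵥ adjCol ω) - MmatCᵀ *ᵥ adjCol ω = Pi.single 0 (alex ω) := by
  rw [MmatC_mulVec, MmatCT_mulVec]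
  ext i
  fin_cases i <;> simp [adjCol, alex] <;> ring

/-- `ω M - Mᵀ` is injective where `Δ(ω) ≠ 0`: two rows of its adjugate kill the coordinates `x 0`
and `x 6` of a kernel vector, and the sparse equations then propagate the vanishing to all the
others. -/
lemma seifert_injective {ω : ℂ} (hΔ : alex ω ≠ 0) (x : Fin 12 → ℂ)
    (h : ω • (MmatC *ᵥ x) - MmatCᵀ *ᵥ x = 0) : x = 0 := by
  rw [MmatC_mulVec, MmatCT_mulVec] at h
  have h0 := congrFun h 0
  have h1 := congrFun h 1
  have h2 := congrFun h 2
  have h3 := congrFun h 3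
  have h4 := congrFun h 4
  have h5 := congrFun h 5
  have h6 := congrFun h 6
  have h7 := congrFun h 7
  have h8 := congrFun h 8
  have h9 := congrFun h 9
  have h10 := congrFun h 10
  have h11 := congrFun h 11
  simp at h0 h1 h2 h3 h4 h5 h6 h7 h8 h9 h10 h11
  -- The coefficients below are the rows of index `0` and `6` of the adjugate of `ω M - Mᵀ`.
  have x0 : x 0 = 0 := by
    refine (mul_eq_zero.mp ?_).resolve_left hΔ
    unfold alex
    linear_combination (1 - ω + ω ^ 3 - ω ^ 4 + ω ^ 7 - ω ^ 8 + ω ^ 10 - ω ^ 11) * h0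
      + (1 - ω + ω ^ 3 - ω ^ 4) * h1
      + (1 - ω + ω ^ 3 - ω ^ 5 + ω ^ 6 - ω ^ 8 + ω ^ 9) * h2
      + (1 - ω + ω ^ 4 - ω ^ 5 + ω ^ 7 - ω ^ 8) * h3
      + (1 - ω) * h4
      + (1 - ω ^ 2 + ω ^ 3 - ω ^ 5 + ω ^ 6) * h5
      + (-ω ^ 6 + ω ^ 7 - ω ^ 8 + ω ^ 10 - ω ^ 11) * h6
      + (ω ^ 5 - 2 * ω ^ 6 + ω ^ 7 - ω ^ 9 + ω ^ 10) * h7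
      + (ω ^ 5 - ω ^ 6) * h8
      + (-ω ^ 3 + ω ^ 4 - ω ^ 6 + ω ^ 7 - ω ^ 8) * h9
      + (ω ^ 2 - 2 * ω ^ 3 + ω ^ 4 + ω ^ 5 - 2 * ω ^ 6 + ω ^ 7) * h10
      + (ω ^ 2 - ω ^ 3 + ω ^ 5 - ω ^ 6) * h11
  have x6 : x 6 = 0 := by
    refine (mul_eq_zero.mp ?_).resolve_left hΔ
    unfold alex
    linear_combination (1 - ω + ω ^ 3 - ω ^ 4 + ω ^ 5) * h0
      + (1 - ω + ω ^ 3 - ω ^ 4 + ω ^ 6 - ω ^ 7 + ω ^ 9 - ω ^ 10) * h1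
      + (1 - ω + ω ^ 4 - ω ^ 5 + ω ^ 6 - ω ^ 8 + ω ^ 9) * h2
      + (1 - ω + ω ^ 2 - ω ^ 3 + ω ^ 4) * h3
      + (1 - ω + ω ^ 6 - ω ^ 7) * h4
      + (ω - ω ^ 2 + ω ^ 4 - ω ^ 5 + ω ^ 6) * h5
      + (1 - ω + ω ^ 3 - ω ^ 4 + ω ^ 5 - ω ^ 6 + ω ^ 7 - ω ^ 8 + ω ^ 10 - ω ^ 11) * h6
      + (1 - ω + ω ^ 3 - 2 * ω ^ 4 + 2 * ω ^ 5 - ω ^ 6) * h7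
      + (1 - ω + ω ^ 3 - ω ^ 4 + ω ^ 5 - ω ^ 8 + ω ^ 9) * h8
      + (1 - ω + ω ^ 2 - ω ^ 3 + ω ^ 5 - ω ^ 6 + ω ^ 7 - ω ^ 8) * h9
      + (1 - 2 * ω + 2 * ω ^ 2 - ω ^ 3 - ω ^ 4 + 2 * ω ^ 5 - ω ^ 6) * h10
      + (1 - ω + ω ^ 2 - ω ^ 4 + ω ^ 5) * h11
  have x1 : x 1 = 0 := by linear_combination -h0 + (1 - ω) * x0 + ω * x6
  have x7 : x 7 = 0 := by linear_combination -h6 - x0 + x1 + (1 - ω) * x6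
  simp only [x0, x1, x6, x7] at h1 h7
  have x2 : x 2 = 0 := by linear_combination -h1
  have x8 : x 8 = 0 := by linear_combination -h7 + x2
  simp only [x1, x2, x7, x8] at h2 h8
  have x3 : x 3 = 0 := by linear_combination -h2
  have x9 : x 9 = 0 := by linear_combination -h8 + x3
  simp only [x2, x3, x8, x9] at h3 h9
  have x4 : x 4 = 0 := by linear_combination -h3
  have x10 : x 10 = 0 := by linear_combination -h9 + x4
  simp only [x3, x4, x9, x10] at h4 h10
  have x5 : x 5 = 0 := by linear_combination -h4
  have x11 : x 11 = 0 := by linear_combination -h10 + x5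
  ext i
  fin_cases i <;> assumption

/-! ### Inertia and Schur complements -/

section Inertia

variable {ι κ : Type*} [Fintype ι] [Fintype κ] [DecidableEq ι] [DecidableEq κ]

/-- The value of a real diagonal Hermitian form at `c`. -/
lemma star_dotProduct_diagonal_mulVec (d : ι → ℝ) (c : ι → ℂ) :
    star c ⬝ᵥ (diagonal (fun i => (d i : ℂ)) *ᵥ c) = ((∑ i, d i * ‖c i‖ ^ 2 : ℝ) : ℂ) := by
  simp only [dotProduct, mulVec_diagonal, Pi.star_apply]
  push_cast
  refine Finset.sum_congr rfl fun i _ => ?_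
  rw [← Complex.conj_mul' (c i)]
  simp only [RCLike.star_def]
  ring

/-- Half of Sylvester's law of inertia: if the diagonal form `d` is the pull-back of the diagonal
form `e` along `Q`, then `d` has at most as many positive weights as `e`. -/
lemma card_pos_le (d : ι → ℝ) (e : κ → ℝ) (Q : Matrix κ ι ℂ)
    (h : diagonal (fun i => (d i : ℂ)) = Qᴴ * diagonal (fun i => (e i : ℂ)) * Q) :
    (Finset.univ.filter fun i => 0 < d i).card ≤ (Finset.univ.filter fun i => 0 < e i).card := by
  by_contra! hlt
  -- By counting dimensions, some nonzero vector supported on the positive weights of `d`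
  -- is sent by `Q` to a vector vanishing on the positive weights of `e`.
  let ext : ({i // 0 < d i} → ℂ) →ₗ[ℂ] (ι → ℂ) :=
    { toFun := fun c i => if hi : 0 < d i then c ⟨i, hi⟩ else 0
      map_add' := by intro a b; ext i; by_cases hi : 0 < d i <;> simp [hi]
      map_smul' := by intro a b; ext i; by_cases hi : 0 < d i <;> simp [hi] }
  let L : ({i // 0 < d i} → ℂ) →ₗ[ℂ] ({j // 0 < e j} → ℂ) :=
    (LinearMap.funLeft ℂ ℂ Subtype.val) ∘ₗ Q.mulVecLin ∘ₗ ext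
  have hker : LinearMap.ker L ≠ ⊥ := by
    apply LinearMap.ker_ne_bot_of_finrank_lt
    simpa [Fintype.card_subtype] using hlt
  obtain ⟨c, hc, hc0⟩ := (Submodule.ne_bot_iff _).mp hker
  have hLc : ∀ j, 0 < e j → (Q *ᵥ ext c) j = 0 := fun j hj =>
    congrFun (LinearMap.mem_ker.mp hc) ⟨j, hj⟩
  have key : ∑ i, d i * ‖ext c i‖ ^ 2 = ∑ j, e j * ‖(Q *ᵥ ext c) j‖ ^ 2 := by
    have := star_dotProduct_diagonal_mulVec d (ext c)
    rw [h, ← mulVec_mulVec, ← mulVec_mulVec, dotProduct_mulVec, ← star_mulVec,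
      star_dotProduct_diagonal_mulVec] at this
    exact_mod_cast this.symm
  have hneg : ∑ j, e j * ‖(Q *ᵥ ext c) j‖ ^ 2 ≤ 0 := by
    refine Finset.sum_nonpos fun j _ => ?_
    by_cases hj : 0 < e j
    · simp [hLc j hj]
    · exact mul_nonpos_of_nonpos_of_nonneg (not_lt.mp hj) (by positivity)
  obtain ⟨⟨i, hi⟩, hci⟩ := Function.ne_iff.mp hc0
  have hexti : ext c i = c ⟨i, hi⟩ := by simp [ext, hi]
  have hpos : 0 < ∑ i, d i * ‖ext c i‖ ^ 2 := by
    refine Finset.sum_pos' (fun k _ => ?_) ⟨i, Finset.mem_univ _, ?_⟩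
    · by_cases hk : 0 < d k
      · positivity
      · simp [ext, hk]
    · rw [hexti]
      have : 0 < ‖c ⟨i, hi⟩‖ := norm_pos_iff.mpr hci
      positivity
  linarith

/-- Sylvester's law of inertia for diagonal forms. -/
lemma card_pos_eq (d : ι → ℝ) (e : κ → ℝ) (Q : Matrix κ ι ℂ) (R : Matrix ι κ ℂ) (hQR : Q * R = 1)
    (h : diagonal (fun i => (d i : ℂ)) = Qᴴ * diagonal (fun i => (e i : ℂ)) * Q) :
    (Finset.univ.filter fun i => 0 < d i).card = (Finset.univ.filter fun i => 0 < e i).card := by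
  refine le_antisymm (card_pos_le d e Q h) (card_pos_le e d R ?_)
  have hRQ : Rᴴ * Qᴴ = 1 := by rw [← conjTranspose_mul, hQR, conjTranspose_one]
  rw [h]
  calc _ = (Rᴴ * Qᴴ) * diagonal (fun i => (e i : ℂ)) * (Q * R) := by rw [hRQ, hQR]; simp
    _ = _ := by simp only [Matrix.mul_assoc]

lemma card_neg_eq (d : ι → ℝ) (e : κ → ℝ) (Q : Matrix κ ι ℂ) (R : Matrix ι κ ℂ) (hQR : Q * R = 1)
    (h : diagonal (fun i => (d i : ℂ)) = Qᴴ * diagonal (fun i => (e i : ℂ)) * Q) :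
    (Finset.univ.filter fun i => d i < 0).card = (Finset.univ.filter fun i => e i < 0).card := by
  have := card_pos_eq (fun i => -d i) (fun i => -e i) Q R hQR (by
    have hd : diagonal (fun i => ((-d i : ℝ) : ℂ)) = -diagonal (fun i => (d i : ℂ)) := by
      simp [diagonal_neg]
    have he : diagonal (fun i => ((-e i : ℝ) : ℂ)) = -diagonal (fun i => (e i : ℂ)) := by
      simp [diagonal_neg]
    rw [hd, he, h, Matrix.mul_neg, Matrix.neg_mul])
  simpa using this

/-- The number of positive weights minus the number of negative weights of a diagonal form. -/
noncomputable def diagSig (d : ι → ℝ) : ℤ :=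
  ((Finset.univ.filter fun i => 0 < d i).card : ℤ) -
    ((Finset.univ.filter fun i => d i < 0).card : ℤ)

lemma eigenvectorUnitary_conj {A : Matrix ι ι ℂ} (hA : A.IsHermitian) :
    (hA.eigenvectorUnitary : Matrix ι ι ℂ)ᴴ * A * (hA.eigenvectorUnitary : Matrix ι ι ℂ) =
      diagonal (fun i => (hA.eigenvalues i : ℂ)) := by
  have := hA.conjStarAlgAut_star_eigenvectorUnitary
  rw [Unitary.conjStarAlgAut_star_apply] at this
  exact this

lemma eigenvectorUnitary_mul_conj {A : Matrix ι ι ℂ} (hA : A.IsHermitian) :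
    (hA.eigenvectorUnitary : Matrix ι ι ℂ) * (hA.eigenvectorUnitary : Matrix ι ι ℂ)ᴴ = 1 :=
  Unitary.coe_mul_star_self hA.eigenvectorUnitary

lemma eigenvectorUnitary_conj_mul {A : Matrix ι ι ℂ} (hA : A.IsHermitian) :
    (hA.eigenvectorUnitary : Matrix ι ι ℂ)ᴴ * (hA.eigenvectorUnitary : Matrix ι ι ℂ) = 1 :=
  Unitary.coe_star_mul_self hA.eigenvectorUnitary

/-- The signature of a Hermitian matrix can be read off from any diagonalisation by congruence. -/
lemma matSig_eq_diagSig {n : ℕ} {H : Matrix (Fin n) (Fin n) ℂ} (hH : H.IsHermitian) (d : ι → ℝ)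
    (P : Matrix (Fin n) ι ℂ) (R : Matrix ι (Fin n) ℂ) (hPR : P * R = 1)
    (h : Pᴴ * H * P = diagonal (fun i => (d i : ℂ))) :
    matSig H = diagSig d := by
  set U : Matrix (Fin n) (Fin n) ℂ :=
      (hH.eigenvectorUnitary : Matrix (Fin n) (Fin n) ℂ) with hU
  have hUU : U * Uᴴ = 1 := eigenvectorUnitary_mul_conj hH
  have hUU' : Uᴴ * U = 1 := eigenvectorUnitary_conj_mul hH
  have hHU : U * diagonal (fun i => (hH.eigenvalues i : ℂ)) * Uᴴ = H := by
    rw [← eigenvectorUnitary_conj hH, ← hU]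
    calc _ = (U * Uᴴ) * H * (U * Uᴴ) := by simp only [Matrix.mul_assoc]
      _ = H := by rw [hUU]; simp
  have hQR : (Uᴴ * P) * (R * U) = 1 := by
    calc _ = Uᴴ * (P * R) * U := by simp only [Matrix.mul_assoc]
      _ = 1 := by rw [hPR]; simpa using hUU'
  have hd : diagonal (fun i => (d i : ℂ)) =
      (Uᴴ * P)ᴴ * diagonal (fun i => (hH.eigenvalues i : ℂ)) * (Uᴴ * P) := by
    rw [← h]
    calc _ = Pᴴ * (U * diagonal (fun i => (hH.eigenvalues i : ℂ)) * Uᴴ) * P := by rw [hHU]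
      _ = _ := by simp only [conjTranspose_mul, conjTranspose_conjTranspose, Matrix.mul_assoc]
  rw [matSig, dif_pos hH, diagSig, card_pos_eq d _ _ _ hQR hd, card_neg_eq d _ _ _ hQR hd]

lemma diagSig_sumElim {α β : Type*} [Fintype α] [Fintype β] (d : α → ℝ) (e : β → ℝ) :
    diagSig (Sum.elim d e) = diagSig d + diagSig e := by
  have hp : (Finset.univ.filter fun i => 0 < Sum.elim d e i).card =
      (Finset.univ.filter fun i => 0 < d i).card + (Finset.univ.filter fun i => 0 < e i).card := by
    simp only [Finset.card_filter, Fintype.sum_sum_type]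
    rfl
  have hn : (Finset.univ.filter fun i => Sum.elim d e i < 0).card =
      (Finset.univ.filter fun i => d i < 0).card + (Finset.univ.filter fun i => e i < 0).card := by
    simp only [Finset.card_filter, Fintype.sum_sum_type]
    rfl
  rw [diagSig, diagSig, diagSig, hp, hn]
  push_cast
  ring

/-- Additivity of the signature, and multiplicativity of the determinant, along the Schur
complement `D` of the block `A`, the matrix `V` playing the role of `A⁻¹ B`. -/
lemma matSig_schur {p q : ℕ} {A : Matrix (Fin p) (Fin p) ℂ} (hA : A.IsHermitian)
    {B : Matrix (Fin p) (Fin q) ℂ} {C D : Matrix (Fin q) (Fin q) ℂ} (hD : D.IsHermitian)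
    (V : Matrix (Fin p) (Fin q) ℂ) (hV : A * V = B) (hC : C - Bᴴ * V = D)
    {H : Matrix (Fin (p + q)) (Fin (p + q)) ℂ} (hH : H.IsHermitian)
    (hblock : H.submatrix finSumFinEquiv finSumFinEquiv = fromBlocks A B Bᴴ C) :
    matSig H = matSig A + matSig D ∧ H.det = A.det * D.det := by
  set T : Matrix (Fin p ⊕ Fin q) (Fin p ⊕ Fin q) ℂ := fromBlocks 1 (-V) 0 1 with hT
  set T' : Matrix (Fin p ⊕ Fin q) (Fin p ⊕ Fin q) ℂ := fromBlocks 1 V 0 1 with hT'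
  have hTT' : T * T' = 1 := by
    rw [hT, hT', fromBlocks_multiply]; simp
  have hBV : Bᴴ = Vᴴ * A := by rw [← hV, conjTranspose_mul, hA.eq]
  have hCD : C = Vᴴ * A * V + D := by rw [← hC, hBV]; abel
  have hTH : Tᴴ * fromBlocks A B Bᴴ C * T = fromBlocks A 0 0 D := by
    rw [hT, fromBlocks_conjTranspose, fromBlocks_multiply, fromBlocks_multiply]
    congr 1
    · simp
    · simp [hV]
    · simp [hBV]
    · rw [hBV, hCD, ← hV]
      simp [Matrix.mul_assoc]
  constructor
  · set U : Matrix (Fin p) (Fin p) ℂ :=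
      (hA.eigenvectorUnitary : Matrix (Fin p) (Fin p) ℂ) with hU
    set W : Matrix (Fin q) (Fin q) ℂ :=
      (hD.eigenvectorUnitary : Matrix (Fin q) (Fin q) ℂ) with hW
    set X : Matrix (Fin p ⊕ Fin q) (Fin p ⊕ Fin q) ℂ := fromBlocks U 0 0 W with hX
    have hXX : X * Xᴴ = 1 := by
      rw [hX, fromBlocks_conjTranspose, fromBlocks_multiply]
      simp [hU, hW, eigenvectorUnitary_mul_conj]
    have hAsig : matSig A = diagSig hA.eigenvalues := by rw [matSig, dif_pos hA, diagSig]
    have hDsig : matSig D = diagSig hD.eigenvalues := by rw [matSig, dif_pos hD, diagSig]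
    rw [hAsig, hDsig, ← diagSig_sumElim]
    refine matSig_eq_diagSig hH _ ((T * X).submatrix finSumFinEquiv.symm id)
      ((Xᴴ * T').submatrix id finSumFinEquiv.symm) ?_ ?_
    · have : T * X * (Xᴴ * T') = 1 := by
        calc _ = T * (X * Xᴴ) * T' := by simp only [Matrix.mul_assoc]
          _ = 1 := by rw [hXX, Matrix.mul_one, hTT']
      rw [← submatrix_mul _ _ _ id _ Function.bijective_id, this, submatrix_one_equiv]
    · have : H = (fromBlocks A B Bᴴ C).submatrix finSumFinEquiv.symm finSumFinEquiv.symm := by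
        rw [← hblock]; simp
      rw [this, conjTranspose_submatrix, submatrix_mul_equiv, submatrix_mul_equiv,
        submatrix_id_id, conjTranspose_mul]
      calc _ = Xᴴ * (Tᴴ * fromBlocks A B Bᴴ C * T) * X := by simp only [Matrix.mul_assoc]
        _ = fromBlocks (Uᴴ * A * U) 0 0 (Wᴴ * D * W) := by
          rw [hTH, hX, fromBlocks_conjTranspose, fromBlocks_multiply, fromBlocks_multiply]; simp
        _ = _ := by
          rw [hU, hW, eigenvectorUnitary_conj, eigenvectorUnitary_conj, fromBlocks_diagonal]
          congr 1
          ext i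
          cases i <;> rfl
  · have h1 : T.det = 1 := by rw [hT, det_fromBlocks_zero₂₁]; simp
    have h2 := congrArg det hTH
    rw [det_mul, det_mul, det_conjTranspose, h1, det_fromBlocks_zero₂₁, ← hblock,
      det_submatrix_equiv_self] at h2
    simpa using h2

end Inertia

/-! ### The Schur complement of `H_M` in `Hₙ` -/

lemma isHermitian_twist {n : ℕ} (S : Matrix (Fin n) (Fin n) ℂ) (hS : Sᴴ = Sᵀ) (ω : ℂ) :
    ((1 - ω) • S + (1 - (starRingEnd ℂ) ω) • Sᵀ).IsHermitian := by
  have hS' : Sᵀᴴ = S := by rw [← hS, conjTranspose_conjTranspose]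
  rw [IsHermitian, conjTranspose_add, conjTranspose_smul, conjTranspose_smul, hS, hS', add_comm]
  simp

lemma Hn_isHermitian (m : ℕ) (ω : ℂ) : (Hn m ω).IsHermitian :=
  isHermitian_twist _ (by ext i j; simp [SmatC]) ω

lemma HM_isHermitian (ω : ℂ) : (HM ω).IsHermitian :=
  isHermitian_twist _ (by ext i j; simp [MmatC]) ω

/-- On the unit circle, `H_M(ω)` is a scalar multiple of `ω M - Mᵀ`. -/
lemma HM_mulVec {ω : ℂ} (hω : ω * (starRingEnd ℂ) ω = 1) (x : Fin 12 → ℂ) :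
    HM ω *ᵥ x = ((1 - ω) * (starRingEnd ℂ) ω) • (ω • (MmatC *ᵥ x) - MmatCᵀ *ᵥ x) := by
  rw [HM, add_mulVec, smul_mulVec, smul_mulVec]
  ext i
  simp only [Pi.add_apply, Pi.smul_apply, Pi.sub_apply, smul_eq_mul]
  linear_combination (-(1 - ω) * (MmatC *ᵥ x) i - (MmatCᵀ *ᵥ x) i) * hω

lemma HM_det_ne_zero {ω : ℂ} (hω : ω * (starRingEnd ℂ) ω = 1) (hω1 : ω ≠ 1)
    (hΔ : alex ω ≠ 0) : (HM ω).det ≠ 0 := by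
  intro hdet
  obtain ⟨x, hx0, hx⟩ := exists_mulVec_eq_zero_iff.mpr hdet
  rw [HM_mulVec hω] at hx
  refine hx0 (seifert_injective hΔ x ((smul_eq_zero.mp hx).resolve_left ?_))
  exact mul_ne_zero (sub_ne_zero.mpr hω1.symm) (right_ne_zero_of_mul_eq_one hω)

/-- The off-diagonal block of `Hₙ(ω)`. -/
def offDiag (ω : ℂ) : Matrix (Fin 12) (Fin 2) ℂ :=
  Matrix.of fun i j => if j = 1 then (Pi.single 0 (-(1 - ω)) : Fin 12 → ℂ) i else 0

/-- The lower right `2 × 2` block of `Hₙ(ω)`. -/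
def corner (n : ℕ) (ω : ℂ) : Matrix (Fin 2) (Fin 2) ℂ :=
  (1 - ω) • !![-(n : ℂ), n; n + 1, -(n + 1)] +
    (1 - (starRingEnd ℂ) ω) • !![-(n : ℂ), n + 1; n, -(n + 1)]

lemma Hn_apply (n : ℕ) (ω : ℂ) (a b : Fin 14) :
    Hn n ω a b = (1 - ω) * (Smat n a b : ℂ) + (1 - (starRingEnd ℂ) ω) * (Smat n b a : ℂ) := rfl

lemma HM_apply (ω : ℂ) (a b : Fin 12) :
    HM ω a b = (1 - ω) * (Mmat a b : ℂ) + (1 - (starRingEnd ℂ) ω) * (Mmat b a : ℂ) := rfl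

lemma Smat_inl_inl (n : ℕ) (i j : Fin 12) :
    Smat n (finSumFinEquiv (Sum.inl i : Fin 12 ⊕ Fin 2))
      (finSumFinEquiv (Sum.inl j : Fin 12 ⊕ Fin 2)) = Mmat i j := by
  fin_cases i <;> fin_cases j <;> rfl

lemma Smat_inl_inr (n : ℕ) (i : Fin 12) (j : Fin 2) :
    Smat n (finSumFinEquiv (Sum.inl i : Fin 12 ⊕ Fin 2))
      (finSumFinEquiv (Sum.inr j : Fin 12 ⊕ Fin 2)) = if i = 0 ∧ j = 1 then -1 else 0 := by
  fin_cases i <;> fin_cases j <;> rfl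

lemma Smat_inr_inl (n : ℕ) (i : Fin 2) (j : Fin 12) :
    Smat n (finSumFinEquiv (Sum.inr i : Fin 12 ⊕ Fin 2))
      (finSumFinEquiv (Sum.inl j : Fin 12 ⊕ Fin 2)) = 0 := by
  fin_cases i <;> fin_cases j <;> rfl

lemma Smat_inr_inr (n : ℕ) (i j : Fin 2) :
    Smat n (finSumFinEquiv (Sum.inr i : Fin 12 ⊕ Fin 2))
      (finSumFinEquiv (Sum.inr j : Fin 12 ⊕ Fin 2)) =
      !![-(n : ℤ), n; n + 1, -(n + 1)] i j := by
  fin_cases i <;> fin_cases j <;> rfl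

lemma Hn_blocks (n : ℕ) (ω : ℂ) :
    (Hn n ω).submatrix (finSumFinEquiv (m := 12) (n := 2)) (finSumFinEquiv (m := 12) (n := 2)) =
      fromBlocks (HM ω) (offDiag ω) (offDiag ω)ᴴ (corner n ω) := by
  ext i j
  rw [submatrix_apply, Hn_apply]
  rcases i with i | i <;> rcases j with j | j
  · rw [Smat_inl_inl, Smat_inl_inl, fromBlocks_apply₁₁, HM_apply]
  · rw [Smat_inl_inr, Smat_inr_inl, fromBlocks_apply₁₂]
    by_cases hi : i = 0 <;> by_cases hj : j = 1 <;> simp [offDiag, hi, hj]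
  · rw [Smat_inl_inr, Smat_inr_inl, fromBlocks_apply₂₁]
    by_cases hi : i = 1 <;> by_cases hj : j = 0 <;> simp [offDiag, hi, hj]
  · rw [Smat_inr_inr, Smat_inr_inr, fromBlocks_apply₂₂]
    fin_cases i <;> fin_cases j <;> simp [corner]

/-- The Schur complement of `H_M(ω)` in `Hₙ(ω)`, where `s = |1 - ω|²` and
`f = s (H_M(ω)⁻¹)₀₀`. -/
def schur (n : ℕ) (ω : ℂ) (s f : ℝ) : Matrix (Fin 2) (Fin 2) ℂ :=
  !![-(n * s : ℂ), n * s + (1 - (starRingEnd ℂ) ω);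
     n * s + (1 - ω), -((n + 1) * s + f : ℂ)]

lemma schur_isHermitian (n : ℕ) (ω : ℂ) (s f : ℝ) : (schur n ω s f).IsHermitian := by
  ext i j
  fin_cases i <;> fin_cases j <;> simp [schur]

lemma schur_det (n : ℕ) {ω : ℂ} (s f : ℝ) (hω : ω * (starRingEnd ℂ) ω = 1)
    (hs : ω + (starRingEnd ℂ) ω = 2 - s) :
    (schur n ω s f).det = ((s * (n * f - 1) : ℝ) : ℂ) := by
  rw [schur, det_fin_two_of]
  push_cast
  linear_combination (n * s + 1 : ℂ) * hs - hω

/-- A `2 × 2` Hermitian matrix of negative trace has signature `0` or `-2` according to the sign of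
its determinant. -/
lemma matSig_fin_two {D : Matrix (Fin 2) (Fin 2) ℂ} (hD : D.IsHermitian) {δ τ : ℝ}
    (hdet : D.det = δ) (htr : D.trace = τ) (hτ : τ < 0) :
    (δ < 0 → matSig D = 0) ∧ (0 < δ → matSig D = -2) := by
  have h1 : hD.eigenvalues 0 * hD.eigenvalues 1 = δ := by
    have := hD.det_eq_prod_eigenvalues
    rw [hdet, Fin.prod_univ_two] at this
    apply Complex.ofReal_injective
    rw [Complex.ofReal_mul]
    exact this.symm
  have h2 : hD.eigenvalues 0 + hD.eigenvalues 1 = τ := by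
    have := hD.trace_eq_sum_eigenvalues
    rw [htr, Fin.sum_univ_two] at this
    apply Complex.ofReal_injective
    rw [Complex.ofReal_add]
    exact this.symm
  rw [matSig, dif_pos hD]
  simp only [Finset.card_filter, Fin.sum_univ_two]
  generalize hD.eigenvalues 0 = a at *
  generalize hD.eigenvalues 1 = b at *
  constructor
  · intro hδ
    rcases lt_trichotomy a 0 with ha | ha | ha
    · have hb : 0 < b := by nlinarith
      simp [ha, hb, ha.not_gt, hb.not_gt]
    · simp [ha] at h1; linarith
    · have hb : b < 0 := by nlinarith
      simp [ha, hb, ha.not_gt, hb.not_gt]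
  · intro hδ
    have ha : a < 0 := by
      by_contra! ha
      have hb : 0 < b := by nlinarith
      linarith
    have hb : b < 0 := by nlinarith
    simp [ha, hb, ha.not_gt, hb.not_gt]

/-- Comparison of the two forms at a point of the unit circle where `s (H_M(ω)⁻¹)₀₀ = f`. -/
lemma Hn_compare (n : ℕ) {ω : ℂ} {s f : ℝ} (hω : ω * (starRingEnd ℂ) ω = 1)
    (hs : ω + (starRingEnd ℂ) ω = 2 - s) (hΔ : alex ω ≠ 0)
    (hf : alex ω * f = -((1 - ω) ^ 2 * (1 + ω ^ 3) * (1 + ω ^ 7))) :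
    matSig (Hn n ω) = matSig (HM ω) + matSig (schur n ω s f) ∧
      (Hn n ω).det = (HM ω).det * (schur n ω s f).det := by
  -- The second column of `V` is `H_M⁻¹` applied to that of `offDiag ω`.
  refine matSig_schur (HM_isHermitian ω) (schur_isHermitian n ω s f)
    (Matrix.of fun i j => if j = 1 then -(ω / alex ω) * adjCol ω i else 0) ?_ ?_
    (Hn_isHermitian n ω) (Hn_blocks n ω)
  · ext i j
    fin_cases j
    · simp [mul_apply, offDiag]
    · have h := congrFun (HM_mulVec hω (adjCol ω)) i
      rw [seifert_mulVec_adjCol] at h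
      have hsum : (HM ω * Matrix.of fun i j : Fin _ =>
          if j = (1 : Fin 2) then -(ω / alex ω) * adjCol ω i else 0) i 1 =
          -(ω / alex ω) * (HM ω *ᵥ adjCol ω) i := by
        simp only [mul_apply, mulVec, dotProduct, of_apply, if_true, Finset.mul_sum]
        exact Finset.sum_congr rfl fun k _ => by ring
      refine hsum.trans ?_
      rw [h]
      by_cases hi : i = 0
      · subst hi
        simp [offDiag]
        field_simp
        linear_combination (-(1 - ω)) * hω
      · simp [offDiag, hi]
  · have h0 : ∑ k, (starRingEnd ℂ) (offDiag ω k 1) * (-(ω / alex ω) * adjCol ω k) = f := by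
      have hcol : adjCol ω 0 = (1 - ω) * (1 + ω ^ 3) * (1 + ω ^ 7) := by
        simp [adjCol]; ring
      rw [Finset.sum_eq_single 0 (fun k _ hk => by simp [offDiag, hk]) (by simp), hcol]
      simp [offDiag]
      field_simp
      linear_combination (-(1 - ω) * (1 + ω ^ 3) * (1 + ω ^ 7)) * hω - hf
    ext i j
    fin_cases i <;> fin_cases j
    · simp [mul_apply, corner, schur, offDiag]
      linear_combination (n : ℂ) * hs
    · simp [mul_apply, corner, schur, offDiag]
      linear_combination (-n : ℂ) * hs
    · simp [mul_apply, corner, schur]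
      linear_combination (-n : ℂ) * hs
    · simp [mul_apply, corner, schur] at h0 ⊢
      linear_combination (n + 1 : ℂ) * hs - h0

/-! ### The arc near `-1` -/

/-- `ω⁻⁶ Δ(ω)` as a polynomial in `y = 2 + ω + ω⁻¹`, expanded in powers of
`y - 2 = ω + ω⁻¹`. -/
def alexR (y : ℝ) : ℝ :=
  (y - 2) ^ 6 - (y - 2) ^ 5 - 6 * (y - 2) ^ 4 + 6 * (y - 2) ^ 3 + 8 * (y - 2) ^ 2 - 8 * (y - 2) + 1

/-- `-ω⁻⁶ (1 - ω)² (1 + ω³) (1 + ω⁷)` as a polynomial in `y = 2 + ω + ω⁻¹`. -/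
def numR (y : ℝ) : ℝ :=
  (4 - y) * (y ^ 5 - 10 * y ^ 4 + 35 * y ^ 3 - 49 * y ^ 2 + 21 * y)

lemma alex_eq {ω : ℂ} {y : ℝ} (hω : ω * (starRingEnd ℂ) ω = 1)
    (hy : ω + (starRingEnd ℂ) ω = 2 - (4 - y : ℝ)) : alex ω = ω ^ 6 * alexR y := by
  have h0 : ω ≠ 0 := left_ne_zero_of_mul_eq_one hω
  have hy' : (y : ℂ) = 2 + ω + ω⁻¹ := by
    rw [inv_eq_of_mul_eq_one_right hω]; push_cast at hy; linear_combination -hy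
  rw [alexR]
  push_cast
  rw [hy', alex]
  field_simp
  ring

lemma num_eq {ω : ℂ} {y : ℝ} (hω : ω * (starRingEnd ℂ) ω = 1)
    (hy : ω + (starRingEnd ℂ) ω = 2 - (4 - y : ℝ)) :
    -((1 - ω) ^ 2 * (1 + ω ^ 3) * (1 + ω ^ 7)) = ω ^ 6 * numR y := by
  have h0 : ω ≠ 0 := left_ne_zero_of_mul_eq_one hω
  have hy' : (y : ℂ) = 2 + ω + ω⁻¹ := by
    rw [inv_eq_of_mul_eq_one_right hω]; push_cast at hy; linear_combination -hy
  rw [numR]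
  push_cast
  rw [hy']
  field_simp
  ring

lemma arc_bounds {y : ℝ} (h0 : 0 ≤ y) (h1 : y ≤ 1 / 100) :
    0 < alexR y ∧ alexR y ≤ 2 ∧ y ≤ numR y := by
  have h2 : y ^ 2 ≤ y / 100 := by nlinarith
  have h2' : 0 ≤ y ^ 2 := by positivity
  have h3 : y ^ 3 ≤ y ^ 2 / 100 := by nlinarith
  have h3' : 0 ≤ y ^ 3 := by positivity
  have h4 : y ^ 4 ≤ y ^ 3 / 100 := by nlinarith
  have h4' : 0 ≤ y ^ 4 := by positivity
  have h5 : y ^ 5 ≤ y ^ 4 / 100 := by nlinarith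
  have h5' : 0 ≤ y ^ 5 := by positivity
  have h6 : y ^ 6 ≤ y ^ 5 / 100 := by nlinarith
  have h6' : 0 ≤ y ^ 6 := by positivity
  unfold alexR numR
  refine ⟨?_, ?_, ?_⟩ <;> ring_nf <;> linarith

/-- The equation `numR y / alexR y = q` has a small positive solution, with `y = O(q)`. -/
lemma exists_arc_point {q : ℝ} (h0 : 0 < q) (h1 : q ≤ 1) :
    ∃ y : ℝ, 0 < y ∧ y ≤ 1 / 100 ∧ y ≤ 2 * q ∧ q * alexR y = numR y := by
  have hcont : ContinuousOn (fun y => numR y - q * alexR y) (Set.Icc 0 (1 / 100)) := by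
    unfold numR alexR; fun_prop
  have hmem : (0 : ℝ) ∈ Set.Icc (numR 0 - q * alexR 0) (numR (1 / 100) - q * alexR (1 / 100)) := by
    unfold numR alexR; constructor <;> norm_num <;> linarith
  obtain ⟨y, ⟨hy0, hy1⟩, hy⟩ := intermediate_value_Icc (by norm_num) hcont hmem
  obtain ⟨hpos, hle, hnum⟩ := arc_bounds hy0 hy1
  have heq : q * alexR y = numR y := by linarith
  have hqa : q * alexR y ≤ q * 2 := by gcongr
  refine ⟨y, lt_of_le_of_ne hy0 ?_, hy1, by linarith, heq⟩
  rintro rfl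
  have : 0 < q * alexR 0 := by positivity
  have hn : numR 0 = 0 := by norm_num [numR]
  linarith

/-- The point of the unit circle with real part `y / 2 - 1` and nonnegative imaginary part. -/
noncomputable def arc (y : ℝ) : ℂ := ⟨y / 2 - 1, √(1 - (y / 2 - 1) ^ 2)⟩

lemma arc_mul_conj {y : ℝ} (h0 : 0 ≤ y) (h1 : y ≤ 1 / 100) :
    arc y * (starRingEnd ℂ) (arc y) = 1 := by
  have h : 0 ≤ 1 - (y / 2 - 1) ^ 2 := by nlinarith
  rw [Complex.mul_conj, Complex.normSq_apply, arc]
  simp only [Real.mul_self_sqrt h]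
  norm_cast
  ring

lemma arc_add_conj (y : ℝ) : arc y + (starRingEnd ℂ) (arc y) = 2 - (4 - y : ℝ) := by
  rw [Complex.add_conj, arc]
  push_cast
  ring

lemma continuous_arc : Continuous arc := by
  have : arc = fun y => ((y / 2 - 1 : ℝ) : ℂ) + ((√(1 - (y / 2 - 1) ^ 2) : ℝ) : ℂ) * Complex.I := by
    ext y; exact Complex.mk_eq_add_mul_I _ _
  rw [this]
  fun_prop

/-- The constant-sign refinement of Lemma 5.4 used in the proof of Corollary 1.5:
the sequence `ω_l` can be chosen so that for each fixed `m` the `±2` jump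
`σ_{ω_l}(K_m) - σ_{ω_l}(K₀)` has a constant sign `ε m ∈ {-2, 2}` for all
`l₀ < l ≤ m`. -/
theorem stmt17 :
    ∃ (l₀ : ℕ) (ω : ℕ → ℂ),
      (∀ l : ℕ, l₀ < l → ‖ω l‖ = 1 ∧ ω l ≠ 1) ∧
      Filter.Tendsto ω Filter.atTop (nhds (-1)) ∧
      (∀ l : ℕ, l₀ < l →
        (∀ m : ℕ, (Hn m (ω l)).IsHermitian ∧ (Hn m (ω l)).det ≠ 0) ∧
        (HM (ω l)).IsHermitian ∧ (HM (ω l)).det ≠ 0) ∧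
      (∀ l m : ℕ, l₀ < m → m < l →
        matSig (Hn m (ω l)) = matSig (HM (ω l))) ∧
      (∀ m : ℕ, l₀ < m → ∃ e ∈ ({-2, 2} : Set ℤ),
        ∀ l : ℕ, l₀ < l → l ≤ m →
          matSig (Hn m (ω l)) = matSig (HM (ω l)) + e) := by
  -- Any value strictly between `1 / l` and `1 / (l - 1)` would do for `s (H_M⁻¹)₀₀`.
  have hex : ∀ l : ℕ, ∃ y : ℝ, 1 < l → 0 < y ∧ y ≤ 1 / 100 ∧ y ≤ 2 * (2 / (2 * l - 1)) ∧
      2 / (2 * l - 1) * alexR y = numR y := by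
    intro l
    by_cases hl : 1 < l
    · have hl' : (2 : ℝ) ≤ l := by exact_mod_cast hl
      have hq1 : (2 : ℝ) / (2 * l - 1) ≤ 1 := by rw [div_le_one (by linarith)]; linarith
      obtain ⟨y, hy⟩ := exists_arc_point (div_pos two_pos (by linarith)) hq1
      exact ⟨y, fun _ => hy⟩
    · exact ⟨0, fun h => absurd h hl⟩
  choose y hy using hex
  have hone : ∀ l, 1 < l → arc (y l) ≠ 1 := by
    intro l hl h
    obtain ⟨-, h1, -⟩ := hy l hl
    have := congrArg Complex.re h
    simp [arc] at this
    linarith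
  have hq : ∀ l : ℕ, 1 < l → (0 : ℝ) < 2 * l - 1 := by
    intro l hl
    have : (2 : ℝ) ≤ l := by exact_mod_cast hl
    linarith
  have hΔ : ∀ l, 1 < l → alex (arc (y l)) ≠ 0 := by
    intro l hl
    obtain ⟨h0, h1, -⟩ := hy l hl
    have hω := arc_mul_conj h0.le h1
    rw [alex_eq hω (arc_add_conj _)]
    exact mul_ne_zero (pow_ne_zero _ (left_ne_zero_of_mul_eq_one hω))
      (by exact_mod_cast (arc_bounds h0.le h1).1.ne')
  have hcmp : ∀ l, 1 < l → ∀ n, _ := fun l hl n =>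
    Hn_compare n (s := 4 - y l) (f := 2 / (2 * l - 1)) (arc_mul_conj (hy l hl).1.le (hy l hl).2.1)
      (arc_add_conj _) (hΔ l hl) (by
        have hω := arc_mul_conj (hy l hl).1.le (hy l hl).2.1
        rw [num_eq hω (arc_add_conj _), alex_eq hω (arc_add_conj _), ← (hy l hl).2.2.2]
        push_cast
        ring)
  have hdet : ∀ l (hl : 1 < l) (n : ℕ), _ := fun l hl n =>
    schur_det n (4 - y l) (2 / (2 * l - 1)) (arc_mul_conj (hy l hl).1.le (hy l hl).2.1)
      (arc_add_conj _)
  have hHM : ∀ l, 1 < l → (HM (arc (y l))).det ≠ 0 := fun l hl =>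
    HM_det_ne_zero (arc_mul_conj (hy l hl).1.le (hy l hl).2.1) (hone l hl) (hΔ l hl)
  have hsig : ∀ l, 1 < l → ∀ n : ℕ, _ := fun l hl n =>
    matSig_fin_two (schur_isHermitian n (arc (y l)) (4 - y l) (2 / (2 * l - 1))) (hdet l hl n)
      (τ := -((2 * n + 1) * (4 - y l) + 2 / (2 * l - 1)))
      (by rw [schur, trace_fin_two_of]; push_cast; ring) (by
        have h1 := div_pos two_pos (hq l hl)
        have h2 : 0 < 4 - y l := by linarith [(hy l hl).2.1]
        have : 0 < (2 * n + 1) * (4 - y l) := by positivity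
        linarith)
  have hs : ∀ l, 1 < l → 0 < 4 - y l := fun l hl => by linarith [(hy l hl).2.1]
  have hlt : ∀ l, 1 < l → ∀ n : ℕ, n < l → (4 - y l) * (n * (2 / (2 * l - 1)) - 1) < 0 := by
    intro l hl n hn
    have : (n : ℝ) + 1 ≤ l := by exact_mod_cast hn
    refine mul_neg_of_pos_of_neg (hs l hl) ?_
    rw [sub_neg, ← mul_div_assoc, div_lt_one (hq l hl)]
    linarith
  have hgt : ∀ l, 1 < l → ∀ n : ℕ, l ≤ n → 0 < (4 - y l) * (n * (2 / (2 * l - 1)) - 1) := by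
    intro l hl n hn
    have : (l : ℝ) ≤ n := by exact_mod_cast hn
    refine mul_pos (hs l hl) ?_
    rw [sub_pos, ← mul_div_assoc, one_lt_div (hq l hl)]
    linarith
  refine ⟨1, fun l => arc (y l), fun l hl => ⟨?_, hone l hl⟩, ?_, fun l hl =>
    ⟨fun n => ⟨Hn_isHermitian _ _, ?_⟩, HM_isHermitian _, hHM l hl⟩, ?_, ?_⟩
  · have h := arc_mul_conj (hy l hl).1.le (hy l hl).2.1
    rw [Complex.mul_conj'] at h
    have h' : ‖arc (y l)‖ ^ 2 = 1 := by exact_mod_cast h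
    exact (pow_eq_one_iff_of_nonneg (norm_nonneg _) two_ne_zero).mp h'
  · have hbound : Filter.Tendsto (fun l : ℕ => 2 * (2 / (2 * (l : ℝ) - 1))) Filter.atTop
        (nhds 0) := by
      have h1 : Filter.Tendsto (fun l : ℕ => 2 * (l : ℝ) - 1) Filter.atTop Filter.atTop :=
        Filter.tendsto_atTop_add_const_right _ _
          (tendsto_natCast_atTop_atTop.const_mul_atTop two_pos)
      simpa using (h1.const_div_atTop 2).const_mul 2
    have hy0 : Filter.Tendsto y Filter.atTop (nhds 0) := by
      refine tendsto_of_tendsto_of_tendsto_of_le_of_le' tendsto_const_nhds hbound ?_ ?_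
      · filter_upwards [Filter.eventually_gt_atTop 1] with l hl using (hy l hl).1.le
      · filter_upwards [Filter.eventually_gt_atTop 1] with l hl using (hy l hl).2.2.1
    have harc0 : arc 0 = -1 := by
      apply Complex.ext <;> simp [arc]
    rw [← harc0]
    exact (continuous_arc.tendsto 0).comp hy0
  · rw [(hcmp l hl n).2, hdet l hl n]
    refine mul_ne_zero (hHM l hl) (Complex.ofReal_ne_zero.mpr ?_)
    rcases lt_or_ge n l with h | h
    · exact (hlt l hl n h).ne
    · exact (hgt l hl n h).ne'
  · intro l m hm hml
    have hl := hm.trans hml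
    rw [(hcmp l hl m).1, (hsig l hl m).1 (hlt l hl m hml), add_zero]
  · refine fun m hm => ⟨-2, by simp, fun l hl hlm => ?_⟩
    rw [(hcmp l hl m).1, (hsig l hl m).2 (hgt l hl m hlm)]
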